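/- Let c > 4/3 and let p3 = (2c)/3 − (1/3)*sqrt(c*(c−1)). The menu M = {((0,0),0), ((1/c,1),2/3), ((1,1),p3)} has revenue exactly (2/27)*(4 + c + sqrt(c*(c−1))) under the uniform distribution μ on the triangle T = {(v1,v2) : v1 ≥ 0, v2 ≥ 0, v1/c + v2 ≤ 1}. Hence, combined with the matching upper bound over all IC and IR mechanisms, this menu is the revenue-optimal mechanism for this distribution. -/

import Mathlib

open MeasureTheory Real

noncomputable section

/-- Utility of a buyer with value `v = (v₁, v₂)` for a menu item
`it = ((x₁, x₂), p)`, namely `v₁ * x₁ + v₂ * x₂ - p`. -/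
def util (v : ℝ × ℝ) (it : (ℝ × ℝ) × ℝ) : ℝ :=
  v.1 * it.1.1 + v.2 * it.1.2 - it.2

/-- `M` is a menu: every item has allocation in `[0,1]²` and nonnegative price,
and the zero item `((0,0),0)` belongs to `M`. -/
def IsMenu (M : Finset ((ℝ × ℝ) × ℝ)) : Prop :=
  (((0 : ℝ), (0 : ℝ)), (0 : ℝ)) ∈ M ∧
    ∀ it ∈ M, it.1.1 ∈ Set.Icc (0 : ℝ) 1 ∧ it.1.2 ∈ Set.Icc (0 : ℝ) 1 ∧ 0 ≤ it.2

/-- The price paid by a buyer with value `v`: the highest price among the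
utility-maximizing menu items of `M`. -/
def buyerPrice (M : Finset ((ℝ × ℝ) × ℝ)) (v : ℝ × ℝ) : ℝ :=
  sSup {p : ℝ | ∃ it ∈ M, it.2 = p ∧ ∀ it' ∈ M, util v it' ≤ util v it}

/-- Revenue of the menu `M` under the uniform distribution on `[0,1]²`. -/
def rev (M : Finset ((ℝ × ℝ) × ℝ)) : ℝ :=
  ∫ v in Set.Icc ((0 : ℝ), (0 : ℝ)) ((1 : ℝ), (1 : ℝ)), buyerPrice M v

/-- The triangle `T = {(v₁,v₂) : v₁ ≥ 0, v₂ ≥ 0, v₁/c + v₂ ≤ 1}`. -/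
def Tri (c : ℝ) : Set (ℝ × ℝ) := {v | 0 ≤ v.1 ∧ 0 ≤ v.2 ∧ v.1 / c + v.2 ≤ 1}

/-- The uniform probability measure on the triangle `Tri c`, i.e. the measure
with density `2 / c` with respect to Lebesgue measure, restricted to `Tri c`. -/
def triMeasure (c : ℝ) : Measure (ℝ × ℝ) :=
  ENNReal.ofReal (2 / c) • (volume.restrict (Tri c))

/-- Revenue of the menu `M` under the uniform distribution on the triangle `Tri c`. -/
def revTri (c : ℝ) (M : Finset ((ℝ × ℝ) × ℝ)) : ℝ :=
  ∫ v, buyerPrice M v ∂(triMeasure c)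

/-!
If a buyer with value `v` receives `x v` and pays `p v`, then a buyer with value `r • v` can imitate
it, so the indirect utility `u` satisfies `(r - 1) * p v ≤ u (r • v) - r * u v`. Integrating over
the triangle `T` and letting `r` decrease to `1` yields
`∫_T p ≤ ∫_{hypotenuse} u - 3 * ∫_T u`, where the hypotenuse is parametrized by `v₁`.

The right-hand side is bounded by bounding `3 * ∫_T u` from below on disjoint pieces of `T`. Since
the gradient of `u` lies in `[0, 1]²`, strips of relative width `1 / 3` along the hypotenuse pay for
the values of `u` on its two ends. In between, a smaller triangle pays only for part of them, and
what is left is at most a constant plus a multiple of the value of `u` at the centroid of a triangle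
in which the optimal mechanism sells the bundle; Jensen's inequality on that triangle pays for this.
The height `h` of that triangle is fixed by the requirement that its mass matches the multiple,
`9 * (c - 1) * h ^ 2 = c`, which is where `√(c * (c - 1)) = 3 * (c - 1) * h` comes from. Integrating
the price of the menu column by column shows that it attains the bound.
-/

open Set Filter Topology Pointwise

section GeneralMeasures

lemma integrableOn_of_continuous_of_isBounded {X : Type*} [PseudoMetricSpace X] [ProperSpace X]
    [MeasurableSpace X] [OpensMeasurableSpace X] {μ : Measure X} [IsFiniteMeasureOnCompacts μ]
    {f : X → ℝ} {S : Set X} (hf : Continuous f) (hS : Bornology.IsBounded S) :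
    IntegrableOn f S μ :=
  (hf.continuousOn.integrableOn_compact' hS.isCompact_closure
    isClosed_closure.measurableSet).mono_set subset_closure

lemma setIntegral_preimage_swap {α β : Type*} [MeasureSpace α] [MeasureSpace β]
    [SFinite (volume : Measure α)] [SFinite (volume : Measure β)] (R : Set (β × α))
    (f : α × β → ℝ) : ∫ v in Prod.swap ⁻¹' R, f v = ∫ v in R, f v.swap :=
  Measure.measurePreserving_swap.setIntegral_preimage_emb
    MeasurableEquiv.prodComm.measurableEmbedding (fun v => f v.swap) R

lemma sum_setIntegral_le_of_pairwise_disjoint {X ι : Type*} [MeasurableSpace X] [Fintype ι]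
    {μ : Measure X} {f : X → ℝ} {S : Set X} {R : ι → Set X} (hf : IntegrableOn f S μ)
    (hnonneg : ∀ v, 0 ≤ f v) (hmeas : ∀ i, MeasurableSet (R i))
    (hdisj : Pairwise (Function.onFun Disjoint R)) (hsub : ∀ i, R i ⊆ S) :
    ∑ i, ∫ v in R i, f v ∂μ ≤ ∫ v in S, f v ∂μ := by
  rw [← integral_iUnion_fintype hmeas hdisj fun i => hf.mono_set (hsub i)]
  exact setIntegral_mono_set hf (Eventually.of_forall hnonneg) (iUnion_subset hsub).eventuallyLE

end GeneralMeasures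

section PlanarIntegrals

variable {a b : ℝ} {l g : ℝ → ℝ} {f : ℝ × ℝ → ℝ}

lemma ae_fst_ne (a : ℝ) : ∀ᵐ v : ℝ × ℝ, v.1 ≠ a :=
  Measure.quasiMeasurePreserving_fst.ae (Measure.ae_ne volume a)

lemma ae_snd_ne_of_measurable (hl : Measurable l) : ∀ᵐ v : ℝ × ℝ, v.2 ≠ l v.1 := by
  have hmeas : MeasurableSet {v : ℝ × ℝ | v.2 ≠ l v.1} :=
    (measurableSet_eq_fun measurable_snd (hl.comp measurable_fst)).compl
  rw [Measure.volume_eq_prod, Measure.ae_prod_iff_ae_ae hmeas]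
  exact Eventually.of_forall fun x => Measure.ae_ne volume (l x)

lemma regionBetween_Ioo_ae_eq_Icc (hl : Measurable l) (hg : Measurable g) :
    regionBetween l g (Ioo a b) =ᵐ[volume]
      {v : ℝ × ℝ | v.1 ∈ Icc a b ∧ v.2 ∈ Icc (l v.1) (g v.1)} := by
  filter_upwards [ae_fst_ne a, ae_fst_ne b, ae_snd_ne_of_measurable hl,
    ae_snd_ne_of_measurable hg] with v hva hvb hvl hvg
  refine propext ⟨fun hv => ⟨Ioo_subset_Icc_self hv.1, Ioo_subset_Icc_self hv.2⟩, fun hv => ?_⟩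
  exact ⟨⟨hv.1.1.lt_of_ne' hva, hv.1.2.lt_of_ne hvb⟩,
    ⟨hv.2.1.lt_of_ne' hvl, hv.2.2.lt_of_ne hvg⟩⟩

lemma isBounded_regionBetween_Ioo (hl : Continuous l) (hg : Continuous g) :
    Bornology.IsBounded (regionBetween l g (Ioo a b)) := by
  obtain ⟨m, hm⟩ := (isCompact_Icc (a := a) (b := b)).bddBelow_image hl.continuousOn
  obtain ⟨M, hM⟩ := (isCompact_Icc (a := a) (b := b)).bddAbove_image hg.continuousOn
  refine (Metric.isBounded_Icc (a, m) (b, M)).subset fun v hv => ?_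
  have hv₁ : v.1 ∈ Icc a b := Ioo_subset_Icc_self hv.1
  have hlow : m ≤ l v.1 := hm ⟨v.1, hv₁, rfl⟩
  have hupp : g v.1 ≤ M := hM ⟨v.1, hv₁, rfl⟩
  exact ⟨⟨hv₁.1, hlow.trans hv.2.1.le⟩, ⟨hv₁.2, hv.2.2.le.trans hupp⟩⟩

lemma setIntegral_regionBetween_Ioo (hab : a ≤ b) (hl : Measurable l) (hg : Measurable g)
    (hlg : ∀ x ∈ Ioo a b, l x ≤ g x) (hf : IntegrableOn f (regionBetween l g (Ioo a b))) :
    ∫ v in regionBetween l g (Ioo a b), f v = ∫ x in a..b, ∫ y in l x..g x, f (x, y) := by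
  have hR : MeasurableSet (regionBetween l g (Ioo a b)) :=
    measurableSet_regionBetween hl hg measurableSet_Ioo
  have hfi : Integrable ((regionBetween l g (Ioo a b)).indicator f) (volume.prod volume) :=
    (integrable_indicator_iff hR).2 hf
  rw [← integral_indicator hR, Measure.volume_eq_prod, integral_prod _ hfi,
    intervalIntegral.integral_of_le hab, integral_Ioc_eq_integral_Ioo,
    ← integral_indicator measurableSet_Ioo]
  refine integral_congr_ae (Eventually.of_forall fun x => ?_)
  by_cases hx : x ∈ Ioo a b
  · have hslice : (fun y => (regionBetween l g (Ioo a b)).indicator f (x, y)) =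
        (Ioo (l x) (g x)).indicator fun y => f (x, y) := by
      ext y
      simp only [indicator, regionBetween, mem_ofPred_eq, hx, true_and]
    simp only [hslice, indicator_of_mem hx]
    rw [integral_indicator measurableSet_Ioo, intervalIntegral.integral_of_le (hlg x hx),
      integral_Ioc_eq_integral_Ioo]
  · have hslice : ∀ y, (regionBetween l g (Ioo a b)).indicator f (x, y) = 0 := fun y =>
      indicator_of_notMem (fun hv => hx hv.1) f
    simp only [hslice, indicator_of_notMem hx, integral_zero]

end PlanarIntegrals

section IntervalIntegrals

lemma integral_quadratic (A B C a b : ℝ) : ∫ x in a..b, (A + B * x + C * x ^ 2) =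
    A * (b - a) + B * (b ^ 2 - a ^ 2) / 2 + C * (b ^ 3 - a ^ 3) / 3 := by
  have hint : ∀ φ : ℝ → ℝ, Continuous φ → IntervalIntegrable φ volume a b :=
    fun φ hφ => hφ.intervalIntegrable a b
  rw [intervalIntegral.integral_add (hint _ (by fun_prop)) (hint _ (by fun_prop)),
    intervalIntegral.integral_add (hint _ (by fun_prop)) (hint _ (by fun_prop)),
    intervalIntegral.integral_const, intervalIntegral.integral_const_mul,
    intervalIntegral.integral_const_mul, integral_id, integral_pow, smul_eq_mul]
  push_cast
  ring

lemma integral_ite_le {a b τ : ℝ} (k : ℝ) (hab : a ≤ b) (hτ : τ ≤ b) :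
    ∫ y in a..b, (if τ ≤ y then k else 0) = k * (b - max a τ) := by
  have hind : (fun y => if τ ≤ y then k else 0) = (Ici τ).indicator fun _ => k := by
    ext y
    simp only [indicator, mem_Ici]
  rw [intervalIntegral.integral_of_le hab, ← integral_Icc_eq_integral_Ioc, hind,
    setIntegral_indicator measurableSet_Ici, ← Ici_inter_Iic, inter_right_comm, Ici_inter_Ici,
    Ici_inter_Iic, setIntegral_const, Real.volume_real_Icc_of_le (sup_le hab hτ), smul_eq_mul,
    mul_comm]

lemma intervalIntegral_eq_of_eqOn_Ioo {F φ : ℝ → ℝ} {a b : ℝ} (hab : a ≤ b) (hφ : Continuous φ)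
    (heq : EqOn F φ (Ioo a b)) :
    IntervalIntegrable F volume a b ∧ ∫ t in a..b, F t = ∫ t in a..b, φ t :=
  ⟨(hφ.intervalIntegrable a b).congr_uIoo (uIoo_of_le hab ▸ heq.symm),
    intervalIntegral.integral_congr_Ioo_of_le hab heq⟩

end IntervalIntegrals

section Jensen

/-- The open triangle with vertices `(0, b)`, `(0, b + k * h)` and `(h, b + m * h)`. -/
def slantedTriangle (b m k h : ℝ) : Set (ℝ × ℝ) :=
  regionBetween (fun t => b + m * t) (fun t => b + m * t + k * (h - t)) (Ioo 0 h)

variable {b m k h : ℝ}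

lemma integrableOn_slantedTriangle {f : ℝ × ℝ → ℝ} (hf : Continuous f) :
    IntegrableOn f (slantedTriangle b m k h) :=
  integrableOn_of_continuous_of_isBounded hf
    (isBounded_regionBetween_Ioo (by fun_prop) (by fun_prop))

lemma setIntegral_slantedTriangle_affine (hk : 0 ≤ k) (hh : 0 ≤ h) (A B C : ℝ) :
    ∫ v in slantedTriangle b m k h, (A + B * v.1 + C * v.2) =
      k * h ^ 2 / 2 * (A + B * (h / 3) + C * (b + (m + k) * h / 3)) := by
  rw [slantedTriangle, setIntegral_regionBetween_Ioo hh (by fun_prop) (by fun_prop)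
    (fun t ht => le_add_of_nonneg_right (mul_nonneg hk (sub_nonneg.2 ht.2.le)))
    (integrableOn_slantedTriangle (by fun_prop))]
  have hcol : ∀ t, ∫ y in (b + m * t)..(b + m * t + k * (h - t)), (A + B * t + C * y) =
      k * h * (A + C * (b + k * h / 2)) +
        k * (h * (B + C * m - C * k / 2) - (A + C * (b + k * h / 2))) * t +
        -(k * (B + C * m - C * k / 2)) * t ^ 2 := fun t => by
    have hquad := integral_quadratic (A + B * t) C 0 (b + m * t) (b + m * t + k * (h - t))
    simp only [zero_mul, add_zero] at hquad
    rw [hquad]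
    ring
  simp only [hcol, integral_quadratic]
  ring

lemma measureReal_slantedTriangle (hk : 0 ≤ k) (hh : 0 ≤ h) :
    volume.real (slantedTriangle b m k h) = k * h ^ 2 / 2 := by
  simpa only [zero_mul, add_zero, mul_one, setIntegral_const, smul_eq_mul] using
    setIntegral_slantedTriangle_affine (b := b) (m := m) hk hh 1 0 0

lemma setAverage_slantedTriangle_id (hk : 0 < k) (hh : 0 < h) :
    ⨍ v in slantedTriangle b m k h, v = (h / 3, b + (m + k) * h / 3) := by
  have hfst := setIntegral_slantedTriangle_affine (b := b) (m := m) hk.le hh.le 0 1 0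
  have hsnd := setIntegral_slantedTriangle_affine (b := b) (m := m) hk.le hh.le 0 0 1
  simp only [zero_add, one_mul, zero_mul, add_zero] at hfst hsnd
  rw [setAverage_eq, measureReal_slantedTriangle hk.le hh.le, integral_pair
    (f := Prod.fst) (g := Prod.snd) (integrableOn_slantedTriangle continuous_fst)
    (integrableOn_slantedTriangle continuous_snd), hfst, hsnd, Prod.smul_mk, smul_eq_mul,
    smul_eq_mul, inv_mul_cancel_left₀ (by positivity), inv_mul_cancel_left₀ (by positivity)]

lemma area_mul_centroid_le_setIntegral {φ : ℝ × ℝ → ℝ} (hφ : ConvexOn ℝ univ φ) (hk : 0 < k)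
    (hh : 0 < h) : k * h ^ 2 / 2 * φ (h / 3, b + (m + k) * h / 3) ≤
      ∫ v in slantedTriangle b m k h, φ v := by
  have hcont : Continuous φ := continuousOn_univ.1 (hφ.continuousOn isOpen_univ)
  have harea := measureReal_slantedTriangle (b := b) (m := m) hk.le hh.le
  have hpos : 0 < k * h ^ 2 / 2 := by positivity
  have hvol : volume (slantedTriangle b m k h) ≠ 0 ∧ volume (slantedTriangle b m k h) ≠ ⊤ :=
    ENNReal.toReal_ne_zero.1 ((harea.trans_ne hpos.ne'))
  have hjensen := hφ.map_set_average_le hcont.continuousOn isClosed_univ hvol.1 hvol.2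
    (Eventually.of_forall mem_univ)
    (f := id) ((integrableOn_slantedTriangle continuous_fst).prodMk
      (integrableOn_slantedTriangle continuous_snd)) (integrableOn_slantedTriangle hcont)
  simp only [id] at hjensen
  rwa [setAverage_slantedTriangle_id hk hh, setAverage_eq, harea, smul_eq_mul,
    le_inv_mul_iff₀ hpos] at hjensen

end Jensen

/-- The properties of a buyer's indirect utility that the revenue bound rests on: it is convex and
nonnegative, and its gradient lies in `[0, 1]²`. They are required on the whole plane, so that the
utility can be evaluated at multiples of the possible values. -/
structure IsIndirectUtility (u : ℝ × ℝ → ℝ) : Prop where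
  convexOn : ConvexOn ℝ univ u
  nonneg : ∀ v, 0 ≤ u v
  monotone : Monotone u
  le_add : ∀ ⦃w v : ℝ × ℝ⦄, w ≤ v → u v ≤ u w + ((v.1 - w.1) + (v.2 - w.2))

namespace IsIndirectUtility

variable {u : ℝ × ℝ → ℝ} (hu : IsIndirectUtility u)

include hu

lemma continuous : Continuous u :=
  continuousOn_univ.1 (hu.convexOn.continuousOn isOpen_univ)

lemma comp_swap : IsIndirectUtility (u ∘ Prod.swap) where
  convexOn := hu.convexOn.comp_linearMap (LinearEquiv.prodComm ℝ ℝ ℝ).toLinearMap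
  nonneg v := hu.nonneg v.swap
  monotone _ _ hvw := hu.monotone (Prod.swap_le_swap.2 hvw)
  le_add w v hwv := by
    rw [add_comm (v.1 - w.1)]
    exact hu.le_add (Prod.swap_le_swap.2 hwv)

variable {a b : ℝ} {l g : ℝ → ℝ} (hab : a ≤ b) (hl : Continuous l) (hg : Continuous g)
  (hlg : ∀ x ∈ Ioo a b, l x ≤ g x)

include hab hl hg hlg

lemma integral_le_setIntegral_regionBetween :
    ∫ x in a..b, ((g x - l x) * u (x, g x) - (g x - l x) ^ 2 / 2) ≤
      ∫ v in regionBetween l g (Ioo a b), u v := by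
  have hcont := hu.continuous
  have hbdd := isBounded_regionBetween_Ioo (a := a) (b := b) hl hg
  have hlower : Continuous fun v : ℝ × ℝ => u (v.1, g v.1) - (g v.1 - v.2) := by fun_prop
  calc ∫ x in a..b, ((g x - l x) * u (x, g x) - (g x - l x) ^ 2 / 2)
      = ∫ x in a..b, ∫ y in l x..g x, (u (x, g x) - (g x - y)) := by
        congr 1 with x
        have hquad := integral_quadratic (u (x, g x) - g x) 1 0 (l x) (g x)
        simp only [zero_mul, add_zero, one_mul] at hquad
        simp only [← sub_add, hquad]
        ring
    _ = ∫ v in regionBetween l g (Ioo a b), (u (v.1, g v.1) - (g v.1 - v.2)) :=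
        (setIntegral_regionBetween_Ioo hab hl.measurable hg.measurable hlg
          (integrableOn_of_continuous_of_isBounded hlower hbdd)).symm
    _ ≤ ∫ v in regionBetween l g (Ioo a b), u v := by
        refine setIntegral_mono_on (integrableOn_of_continuous_of_isBounded hlower hbdd)
          (integrableOn_of_continuous_of_isBounded hcont hbdd)
          (measurableSet_regionBetween hl.measurable hg.measurable measurableSet_Ioo)
          fun v hv => ?_
        have hstep := hu.le_add (w := v) (v := (v.1, g v.1)) ⟨le_rfl, hv.2.2.le⟩
        simp only [sub_self, zero_add] at hstep
        exact sub_le_iff_le_add.2 hstep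

lemma setIntegral_regionBetween_le_integral :
    ∫ v in regionBetween l g (Ioo a b), u v ≤ ∫ x in a..b, (g x - l x) * u (x, g x) := by
  have hcont := hu.continuous
  have hbdd := isBounded_regionBetween_Ioo (a := a) (b := b) hl hg
  have hupper : Continuous fun v : ℝ × ℝ => u (v.1, g v.1) := by fun_prop
  calc ∫ v in regionBetween l g (Ioo a b), u v
      ≤ ∫ v in regionBetween l g (Ioo a b), u (v.1, g v.1) :=
        setIntegral_mono_on (integrableOn_of_continuous_of_isBounded hcont hbdd)
          (integrableOn_of_continuous_of_isBounded hupper hbdd)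
          (measurableSet_regionBetween hl.measurable hg.measurable measurableSet_Ioo)
          fun v hv => hu.monotone ⟨le_rfl, hv.2.2.le⟩
    _ = ∫ x in a..b, (g x - l x) * u (x, g x) := by
        rw [setIntegral_regionBetween_Ioo hab hl.measurable hg.measurable hlg
          (integrableOn_of_continuous_of_isBounded hupper hbdd)]
        simp only [intervalIntegral.integral_const, smul_eq_mul]

end IsIndirectUtility

/-- The direct mechanism with allocation rule `x` and payment rule `p` is feasible, incentive
compatible and individually rational for buyers with values in `K`. -/
structure IsMechanism (K : Set (ℝ × ℝ)) (x : ℝ × ℝ → ℝ × ℝ) (p : ℝ × ℝ → ℝ) : Prop where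
  allocation_mem : ∀ v ∈ K, (x v).1 ∈ Icc (0 : ℝ) 1 ∧ (x v).2 ∈ Icc (0 : ℝ) 1
  incentive_compatible : ∀ v ∈ K, ∀ w ∈ K, util v (x w, p w) ≤ util v (x v, p v)
  individually_rational : ∀ v ∈ K, 0 ≤ util v (x v, p v)

/-- The utility of a buyer with value `v`, which need not lie in `K`, facing the menu of all
outcomes `(x w, p w)` with `w ∈ K` together with the option of not participating. -/
def indirectUtility (K : Set (ℝ × ℝ)) (x : ℝ × ℝ → ℝ × ℝ) (p : ℝ × ℝ → ℝ) (v : ℝ × ℝ) : ℝ :=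
  max 0 (⨆ w : K, util v (x w, p w))

lemma util_add (v w : ℝ × ℝ) (it : (ℝ × ℝ) × ℝ) :
    util (v + w) it = util v it + (w.1 * it.1.1 + w.2 * it.1.2) := by
  simp only [util, Prod.fst_add, Prod.snd_add]
  ring

namespace IsMechanism

variable {K : Set (ℝ × ℝ)} {x : ℝ × ℝ → ℝ × ℝ} {p : ℝ × ℝ → ℝ}

lemma indirectUtility_le {v : ℝ × ℝ} {B : ℝ} (hB : 0 ≤ B)
    (hutil : ∀ w ∈ K, util v (x w, p w) ≤ B) : indirectUtility K x p v ≤ B :=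
  max_le hB (Real.iSup_le (fun w => hutil w w.2) hB)

variable (hm : IsMechanism K x p)

include hm

lemma util_le_indirectUtility (v : ℝ × ℝ) {w : ℝ × ℝ} (hw : w ∈ K) :
    util v (x w, p w) ≤ indirectUtility K x p v := by
  have hbdd : BddAbove (range fun w' : K => util v (x w', p w')) := by
    refine ⟨util w (x w, p w) + (|v.1 - w.1| + |v.2 - w.2|), ?_⟩
    rintro _ ⟨w', rfl⟩
    obtain ⟨⟨h₁, h₁'⟩, h₂, h₂'⟩ := hm.allocation_mem w' w'.2
    have hfst : (v.1 - w.1) * (x w').1 ≤ |v.1 - w.1| := by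
      nlinarith [le_abs_self (v.1 - w.1), abs_nonneg (v.1 - w.1)]
    have hsnd : (v.2 - w.2) * (x w').2 ≤ |v.2 - w.2| := by
      nlinarith [le_abs_self (v.2 - w.2), abs_nonneg (v.2 - w.2)]
    calc util v (x w', p w') = util (w + (v - w)) (x w', p w') := by rw [add_sub_cancel]
      _ = util w (x w', p w') + ((v.1 - w.1) * (x w').1 + (v.2 - w.2) * (x w').2) :=
          util_add w (v - w) _
      _ ≤ _ := add_le_add (hm.incentive_compatible w hw w' w'.2) (add_le_add hfst hsnd)
  exact (le_ciSup hbdd ⟨w, hw⟩).trans (le_max_right _ _)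

lemma indirectUtility_eq {v : ℝ × ℝ} (hv : v ∈ K) :
    indirectUtility K x p v = util v (x v, p v) :=
  le_antisymm
    (indirectUtility_le (hm.individually_rational v hv) (hm.incentive_compatible v hv))
    (hm.util_le_indirectUtility v hv)

lemma isIndirectUtility : IsIndirectUtility (indirectUtility K x p) where
  nonneg _ := le_max_left _ _
  convexOn := by
    refine ⟨convex_univ, fun v _ w _ α β hα hβ hαβ => indirectUtility_le ?_ fun z hz => ?_⟩
    · exact add_nonneg (mul_nonneg hα (le_max_left _ _)) (mul_nonneg hβ (le_max_left _ _))
    · calc util (α • v + β • w) (x z, p z)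
          = α * util v (x z, p z) + β * util w (x z, p z) := by
            simp only [util, Prod.fst_add, Prod.snd_add, Prod.smul_fst, Prod.smul_snd, smul_eq_mul]
            linear_combination p z * hαβ
        _ ≤ α * indirectUtility K x p v + β * indirectUtility K x p w := by
            gcongr <;> exact hm.util_le_indirectUtility _ hz
  monotone v w hvw := by
    refine indirectUtility_le (le_max_left _ _) fun z hz => ?_
    have hx := hm.allocation_mem z hz
    refine le_trans ?_ (hm.util_le_indirectUtility w hz)
    exact sub_le_sub_right (add_le_add (mul_le_mul_of_nonneg_right hvw.1 hx.1.1)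
      (mul_le_mul_of_nonneg_right hvw.2 hx.2.1)) _
  le_add w v hwv := by
    have hgap₁ : 0 ≤ v.1 - w.1 := sub_nonneg.2 hwv.1
    have hgap₂ : 0 ≤ v.2 - w.2 := sub_nonneg.2 hwv.2
    refine indirectUtility_le (add_nonneg (le_max_left _ _) (add_nonneg hgap₁ hgap₂))
      fun z hz => ?_
    have hx := hm.allocation_mem z hz
    calc util v (x z, p z) = util (w + (v - w)) (x z, p z) := by rw [add_sub_cancel]
      _ = util w (x z, p z) + ((v.1 - w.1) * (x z).1 + (v.2 - w.2) * (x z).2) :=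
          util_add w (v - w) _
      _ ≤ _ := add_le_add (hm.util_le_indirectUtility w hz) (add_le_add
          (mul_le_of_le_one_right hgap₁ hx.1.2) (mul_le_of_le_one_right hgap₂ hx.2.2))

-- A buyer whose value is scaled by `r` can still pretend to have value `v`.
lemma mul_payment_le {v : ℝ × ℝ} (hv : v ∈ K) (r : ℝ) :
    (r - 1) * p v ≤ indirectUtility K x p (r • v) - r * indirectUtility K x p v := by
  have hdeviate := hm.util_le_indirectUtility (r • v) hv
  rw [hm.indirectUtility_eq hv]
  simp only [util, Prod.smul_fst, Prod.smul_snd, smul_eq_mul] at hdeviate ⊢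
  linarith

lemma mul_setIntegral_payment_le (hK : MeasurableSet K) (hbdd : Bornology.IsBounded K)
    (hp : IntegrableOn p K) {r : ℝ} (hr : 0 < r) :
    (r - 1) * ∫ v in K, p v ≤ (r ^ 2)⁻¹ * (∫ v in r • K, indirectUtility K x p v) -
      r * ∫ v in K, indirectUtility K x p v := by
  have hcont := hm.isIndirectUtility.continuous
  have hint : IntegrableOn (fun v => indirectUtility K x p (r • v)) K :=
    integrableOn_of_continuous_of_isBounded (by fun_prop) hbdd
  have hint' : IntegrableOn (fun v => r * indirectUtility K x p v) K :=
    integrableOn_of_continuous_of_isBounded (by fun_prop) hbdd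
  calc (r - 1) * ∫ v in K, p v = ∫ v in K, (r - 1) * p v := (integral_const_mul _ _).symm
    _ ≤ ∫ v in K, (indirectUtility K x p (r • v) - r * indirectUtility K x p v) :=
        setIntegral_mono_on (hp.const_mul _) (hint.sub hint') hK
          fun v hv => hm.mul_payment_le hv r
    _ = (∫ v in K, indirectUtility K x p (r • v)) - r * ∫ v in K, indirectUtility K x p v := by
        rw [integral_sub hint hint', integral_const_mul]
    _ = _ := by
        rw [Measure.setIntegral_comp_smul_of_pos volume _ K hr, Module.finrank_prod,
          Module.finrank_self, smul_eq_mul, one_add_one_eq_two]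

end IsMechanism

section Triangle

variable {c : ℝ}

lemma isClosed_tri (c : ℝ) : IsClosed (Tri c) := by
  have hsum : Continuous fun v : ℝ × ℝ => v.1 / c + v.2 := by fun_prop
  exact (isClosed_le continuous_const continuous_fst).inter
    ((isClosed_le continuous_const continuous_snd).inter (isClosed_le hsum continuous_const))

lemma measurableSet_tri (c : ℝ) : MeasurableSet (Tri c) := (isClosed_tri c).measurableSet

lemma tri_eq_region (hc : 0 < c) :
    Tri c = {v : ℝ × ℝ | v.1 ∈ Icc 0 c ∧ v.2 ∈ Icc 0 (1 - v.1 / c)} := by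
  ext v
  refine ⟨fun hv => ⟨⟨hv.1, ?_⟩, hv.2.1, by linarith [hv.2.2]⟩,
    fun hv => ⟨hv.1.1, hv.2.1, by linarith [hv.2.2]⟩⟩
  exact (div_le_one hc).1 (by linarith [hv.2.1, hv.2.2])

lemma isBounded_tri (hc : 0 < c) : Bornology.IsBounded (Tri c) := by
  refine (Metric.isBounded_Icc ((0 : ℝ), (0 : ℝ)) (c, 1)).subset fun v hv => ?_
  have hv₁ : 0 ≤ v.1 / c := div_nonneg hv.1 hc.le
  rw [tri_eq_region hc] at hv
  exact ⟨⟨hv.1.1, hv.2.1⟩, hv.1.2, hv.2.2.trans (by linarith)⟩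

lemma mem_smul_tri {r : ℝ} (hr : 0 < r) {v : ℝ × ℝ} :
    v ∈ r • Tri c ↔ 0 ≤ v.1 ∧ 0 ≤ v.2 ∧ v.1 / c + v.2 ≤ r := by
  rw [mem_smul_set_iff_inv_smul_mem₀ hr.ne']
  have hsum : r⁻¹ * v.1 / c + r⁻¹ * v.2 = r⁻¹ * (v.1 / c + v.2) := by ring
  simp only [Tri, mem_ofPred_eq, Prod.smul_fst, Prod.smul_snd, smul_eq_mul, hsum,
    mul_nonneg_iff_of_pos_left (inv_pos.2 hr), inv_mul_le_one₀ hr]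

lemma smul_tri_sdiff_tri_subset (hc : 0 < c) {r : ℝ} (hr : 0 < r) :
    r • Tri c \ Tri c ⊆
      {v : ℝ × ℝ | v.1 ∈ Icc 0 (r * c) ∧ v.2 ∈ Icc (1 - v.1 / c) (r - v.1 / c)} := by
  rintro v ⟨hv, hvT⟩
  obtain ⟨hv₁, hv₂, hle⟩ := (mem_smul_tri hr).1 hv
  have hlt : 1 < v.1 / c + v.2 := not_le.1 fun h => hvT ⟨hv₁, hv₂, h⟩
  exact ⟨⟨hv₁, (div_le_iff₀ hc).1 (by linarith)⟩, by linarith, by linarith⟩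

/-- The integral of `u` over the hypotenuse of `r • Tri c`, parametrized by the first
coordinate. -/
def hypotenuseIntegral (c : ℝ) (u : ℝ × ℝ → ℝ) (r : ℝ) : ℝ :=
  ∫ t in (0 : ℝ)..r * c, u (t, r - t / c)

lemma continuous_hypotenuseIntegral {u : ℝ × ℝ → ℝ} (hu : Continuous u) :
    Continuous (hypotenuseIntegral c u) := by
  unfold hypotenuseIntegral
  fun_prop

lemma IsIndirectUtility.setIntegral_smul_tri_le {u : ℝ × ℝ → ℝ} (hu : IsIndirectUtility u)
    (hc : 0 < c) {r : ℝ} (hr : 1 ≤ r) :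
    ∫ v in r • Tri c, u v ≤ (∫ v in Tri c, u v) + (r - 1) * hypotenuseIntegral c u r := by
  have hr0 : 0 < r := by linarith
  have hint : ∀ {S}, Bornology.IsBounded S → IntegrableOn u S := fun hS =>
    integrableOn_of_continuous_of_isBounded hu.continuous hS
  have hnonneg : ∀ S : Set (ℝ × ℝ), 0 ≤ᵐ[volume.restrict S] u :=
    fun _ => Eventually.of_forall hu.nonneg
  have hl : Continuous fun t : ℝ => 1 - t / c := by fun_prop
  have hg : Continuous fun t : ℝ => r - t / c := by fun_prop
  have hae := regionBetween_Ioo_ae_eq_Icc (a := 0) (b := r * c) hl.measurable hg.measurable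
  have hstrip : IntegrableOn u (regionBetween (fun t => 1 - t / c) (fun t => r - t / c)
    (Ioo 0 (r * c))) := hint (isBounded_regionBetween_Ioo hl hg)
  rw [← integral_inter_add_sdiff (measurableSet_tri c) (hint ((isBounded_tri hc).smul₀ r))]
  refine add_le_add (setIntegral_mono_set (hint (isBounded_tri hc)) (hnonneg _)
    inter_subset_right.eventuallyLE) ?_
  calc ∫ v in r • Tri c \ Tri c, u v
      ≤ ∫ v in regionBetween (fun t => 1 - t / c) (fun t => r - t / c) (Ioo 0 (r * c)), u v :=
        setIntegral_mono_set hstrip (hnonneg _)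
          ((smul_tri_sdiff_tri_subset hc hr0).eventuallyLE.trans hae.symm.le)
    _ ≤ ∫ t in (0 : ℝ)..r * c, ((r - t / c) - (1 - t / c)) * u (t, r - t / c) :=
        hu.setIntegral_regionBetween_le_integral (by positivity) hl hg
          fun t _ => sub_le_sub_right hr _
    _ = (r - 1) * hypotenuseIntegral c u r := by
        simp only [sub_sub_sub_cancel_right, intervalIntegral.integral_const_mul,
          hypotenuseIntegral]

lemma IsMechanism.setIntegral_payment_le_hypotenuseIntegral_sub {x : ℝ × ℝ → ℝ × ℝ} {p : ℝ × ℝ → ℝ}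
    (hm : IsMechanism (Tri c) x p) (hc : 0 < c) (hp : IntegrableOn p (Tri c)) :
    ∫ v in Tri c, p v ≤ hypotenuseIntegral c (indirectUtility (Tri c) x p) 1 -
      3 * ∫ v in Tri c, indirectUtility (Tri c) x p v := by
  set u := indirectUtility (Tri c) x p
  have hu : IsIndirectUtility u := hm.isIndirectUtility
  have hscaled : ∀ r > 1, r ^ 2 * ∫ v in Tri c, p v ≤
      hypotenuseIntegral c u r - (1 + r + r ^ 2) * ∫ v in Tri c, u v := fun r hr => by
    have hpay := hm.mul_setIntegral_payment_le (measurableSet_tri c) (isBounded_tri hc) hp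
      (zero_lt_one.trans hr)
    have hgrow := hu.setIntegral_smul_tri_le hc hr.le
    rw [← mul_le_mul_iff_of_pos_left (sub_pos.2 hr)]
    calc (r - 1) * (r ^ 2 * ∫ v in Tri c, p v)
        = r ^ 2 * ((r - 1) * ∫ v in Tri c, p v) := by ring
      _ ≤ r ^ 2 * ((r ^ 2)⁻¹ * (∫ v in r • Tri c, u v) - r * ∫ v in Tri c, u v) := by gcongr
      _ = (∫ v in r • Tri c, u v) - r ^ 3 * ∫ v in Tri c, u v := by
          field_simp
      _ ≤ _ := by linarith
  have hcont := continuous_hypotenuseIntegral (c := c) hu.continuous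
  have hleft : Continuous fun r : ℝ => r ^ 2 * ∫ v in Tri c, p v := by fun_prop
  have hright : Continuous fun r : ℝ =>
    hypotenuseIntegral c u r - (1 + r + r ^ 2) * ∫ v in Tri c, u v := by fun_prop
  have hlimit := le_of_tendsto_of_tendsto ((hleft.tendsto 1).mono_left nhdsWithin_le_nhds)
    ((hright.tendsto 1).mono_left nhdsWithin_le_nhds)
    (eventually_nhdsWithin_of_forall (s := Ioi 1) hscaled)
  norm_num at hlimit
  exact hlimit

end Triangle

section DualBound

/-- The price of the bundle at which a buyer with `v₁ = c * (2 / 3 - h)` is indifferent between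
buying it and buying the lottery `(1 / c, 1)` at price `2 / 3`. -/
def bundlePrice (c h : ℝ) : ℝ := 2 * c / 3 - (c - 1) * h

/-- The strip of vertical width `1 / 3` below the left part of the hypotenuse of `Tri c`. -/
def leftStrip (c h : ℝ) : Set (ℝ × ℝ) :=
  regionBetween (fun t => 2 / 3 - t / c) (fun t => 1 - t / c) (Ioo 0 (c * (2 / 3 - h / 3)))

/-- The triangle above the line `v₂ = h / 3`, to the right of `leftStrip` and below the
hypotenuse of `Tri c`. -/
def middleTriangle (c h : ℝ) : Set (ℝ × ℝ) :=
  regionBetween (fun _ => h / 3) (fun t => 1 - t / c)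
    (Ioo (c * (2 / 3 - h / 3)) (c * (1 - h / 3)))

/-- The strip of horizontal width `c / 3` left of the part of the hypotenuse of `Tri c` below the
line `v₂ = h / 3`. -/
def rightStrip (c h : ℝ) : Set (ℝ × ℝ) :=
  Prod.swap ⁻¹' regionBetween (fun t => c * (2 / 3 - t)) (fun t => c * (1 - t)) (Ioo 0 (h / 3))

/-- The triangle of values below the line `v₁ / c + v₂ = 2 / 3` whose sum exceeds the price of
the bundle. -/
def lowerTriangle (c h : ℝ) : Set (ℝ × ℝ) :=
  Prod.swap ⁻¹' slantedTriangle (bundlePrice c h) (-1) (c - 1) h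

/-- The four disjoint parts of `Tri c` on which the integral of an indirect utility is bounded
below. -/
def dualRegion (c h : ℝ) : Fin 4 → Set (ℝ × ℝ) :=
  ![leftStrip c h, middleTriangle c h, rightStrip c h, lowerTriangle c h]

variable {c h : ℝ} {v : ℝ × ℝ}

lemma measurableSet_dualRegion (c h : ℝ) (i : Fin 4) : MeasurableSet (dualRegion c h i) := by
  have hregion : ∀ {l g : ℝ → ℝ} {a b : ℝ}, Continuous l → Continuous g →
      MeasurableSet (regionBetween l g (Ioo a b)) := fun hl hg =>
    measurableSet_regionBetween hl.measurable hg.measurable measurableSet_Ioo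
  fin_cases i
  · change MeasurableSet (leftStrip c h)
    exact hregion (by fun_prop) (by fun_prop)
  · change MeasurableSet (middleTriangle c h)
    exact hregion (by fun_prop) (by fun_prop)
  · change MeasurableSet (rightStrip c h)
    exact measurable_swap (hregion (by fun_prop) (by fun_prop))
  · change MeasurableSet (lowerTriangle c h)
    exact measurable_swap (hregion (by fun_prop) (by fun_prop))

lemma mul_fst_div_add_snd (hc : 0 < c) : c * (v.1 / c + v.2) = v.1 + c * v.2 := by
  field_simp

lemma mem_leftStrip (hc : 0 < c) (hv : v ∈ leftStrip c h) :
    0 < v.1 ∧ v.1 < c * (2 / 3 - h / 3) ∧ 2 * c / 3 < v.1 + c * v.2 ∧ v.1 + c * v.2 < c := by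
  obtain ⟨⟨h₁, h₂⟩, h₃, h₄⟩ := hv
  simp only at h₃ h₄
  rw [← mul_fst_div_add_snd hc]
  exact ⟨h₁, h₂, by nlinarith, by nlinarith⟩

lemma mem_middleTriangle (hc : 0 < c) (hv : v ∈ middleTriangle c h) :
    c * (2 / 3 - h / 3) < v.1 ∧ h / 3 < v.2 ∧ v.1 + c * v.2 < c := by
  obtain ⟨⟨h₁, -⟩, h₃, h₄⟩ := hv
  simp only at h₃ h₄
  rw [← mul_fst_div_add_snd hc]
  exact ⟨h₁, h₃, by nlinarith⟩

lemma mem_rightStrip (hv : v ∈ rightStrip c h) :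
    0 < v.2 ∧ v.2 < h / 3 ∧ 2 * c / 3 < v.1 + c * v.2 ∧ v.1 + c * v.2 < c := by
  obtain ⟨⟨h₁, h₂⟩, h₃, h₄⟩ := hv
  simp only [Prod.fst_swap, Prod.snd_swap] at h₁ h₂ h₃ h₄
  exact ⟨h₁, h₂, by linarith, by linarith⟩

lemma mem_lowerTriangle (hv : v ∈ lowerTriangle c h) :
    0 < v.2 ∧ v.2 < h ∧ 2 * c / 3 - (c - 1) * h < v.1 + v.2 ∧ v.1 + c * v.2 < 2 * c / 3 := by
  obtain ⟨⟨h₁, h₂⟩, h₃, h₄⟩ := hv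
  simp only [Prod.fst_swap, Prod.snd_swap, bundlePrice] at h₁ h₂ h₃ h₄
  exact ⟨h₁, h₂, by linarith, by linarith⟩

lemma mem_tri_iff (hc : 0 < c) : v ∈ Tri c ↔ 0 ≤ v.1 ∧ 0 ≤ v.2 ∧ v.1 + c * v.2 ≤ c := by
  rw [← mul_fst_div_add_snd hc, mul_le_iff_le_one_right hc]
  rfl

lemma dualRegion_subset_tri (hc : 1 < c) (h0 : 0 < h) (h1 : h ≤ 2 / 3) (i : Fin 4) :
    dualRegion c h i ⊆ Tri c := by
  have hc0 : 0 < c := by linarith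
  intro v hv
  rw [mem_tri_iff hc0]
  fin_cases i
  · obtain ⟨h₁, h₂, h₃, h₄⟩ := mem_leftStrip hc0 hv
    exact ⟨h₁.le, by nlinarith, h₄.le⟩
  · obtain ⟨h₁, h₂, h₃⟩ := mem_middleTriangle hc0 hv
    exact ⟨by nlinarith, by linarith, h₃.le⟩
  · obtain ⟨h₁, h₂, h₃, h₄⟩ := mem_rightStrip hv
    exact ⟨by nlinarith, h₁.le, h₄.le⟩
  · obtain ⟨h₁, h₂, h₃, h₄⟩ := mem_lowerTriangle hv
    exact ⟨by nlinarith, h₁.le, by linarith⟩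

lemma pairwise_disjoint_dualRegion (hc : 0 < c) :
    Pairwise (Function.onFun Disjoint (dualRegion c h)) := by
  rw [pairwise_disjoint_on]
  intro i j hij
  rw [disjoint_left]
  intro v hi hj
  fin_cases i <;> fin_cases j <;> simp at hij
  · linarith [mem_leftStrip hc hi, mem_middleTriangle hc hj]
  · nlinarith [mem_leftStrip hc hi, mem_rightStrip hj]
  · linarith [mem_leftStrip hc hi, mem_lowerTriangle hj]
  · linarith [mem_middleTriangle hc hi, mem_rightStrip hj]
  · nlinarith [mem_middleTriangle hc hi, mem_lowerTriangle hj]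
  · linarith [mem_rightStrip hi, mem_lowerTriangle hj]

/-- The centroid of `lowerTriangle c h`. -/
def lowerCentroid (c h : ℝ) : ℝ × ℝ := (2 * c / 3 - (2 * c - 1) * h / 3, h / 3)

lemma integral_hypotenuse_eq_mul_integral (f : ℝ × ℝ → ℝ) (hc : c ≠ 0) (s : ℝ) :
    ∫ t in c * (1 - s)..c, f (t, 1 - t / c) = c * ∫ y in (0 : ℝ)..s, f (c * (1 - y), y) := by
  have hpoint : ∀ y, (c - c * y, 1 - (c - c * y) / c) = (c * (1 - y), y) := fun y => by
    ext
    · ring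
    · field_simp
      ring
  have hsubst := intervalIntegral.mul_integral_comp_sub_mul (a := 0) (b := s)
    (f := fun t => f (t, 1 - t / c)) c c
  simp only [hpoint, mul_zero, sub_zero] at hsubst
  rw [hsubst, mul_sub, mul_one]

-- The coefficient `c / 6` of `k` is what `lowerTriangle` compensates.
lemma integral_middle_majorant (hc : c ≠ 0) (k : ℝ) :
    ∫ t in c * (2 / 3 - h / 3)..c * (1 - h / 3),
        ((1 - 3 * (1 - t / c - h / 3)) *
          (k + (t - (lowerCentroid c h).1 + (1 - t / c - (lowerCentroid c h).2))) +
          3 / 2 * (1 - t / c - h / 3) ^ 2) =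
      c / 6 * k + c / 54 * (2 + 2 * c + 3 * (c - 1) * h) := by
  set K := (c + (c - 1) * h) / 3 with hK
  have hsubst := intervalIntegral.mul_integral_comp_sub_mul (a := 0) (b := 1 / 3)
    (f := fun t => (1 - 3 * (1 - t / c - h / 3)) *
      (k + (t - (lowerCentroid c h).1 + (1 - t / c - (lowerCentroid c h).2))) +
      3 / 2 * (1 - t / c - h / 3) ^ 2) c (c * (1 - h / 3))
  have hpoly : ∀ w, (1 - 3 * (1 - (c * (1 - h / 3) - c * w) / c - h / 3)) *
      (k + (c * (1 - h / 3) - c * w - (lowerCentroid c h).1 +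
        (1 - (c * (1 - h / 3) - c * w) / c - (lowerCentroid c h).2))) +
      3 / 2 * (1 - (c * (1 - h / 3) - c * w) / c - h / 3) ^ 2 =
      (k + K) + (-3 * (k + K) - (c - 1)) * w + (3 * (c - 1) + 3 / 2) * w ^ 2 := fun w => by
    have hw : (c * (1 - h / 3) - c * w) / c = 1 - h / 3 - w := by field_simp
    rw [hw, lowerCentroid, hK]
    ring
  simp only [hpoly, integral_quadratic] at hsubst
  have hleft : c * (2 / 3 - h / 3) = c * (1 - h / 3) - c * (1 / 3) := by ring
  have hright : c * (1 - h / 3) = c * (1 - h / 3) - c * 0 := by ring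
  rw [hleft]
  nth_rw 2 [hright]
  rw [← hsubst]
  ring

namespace IsIndirectUtility

variable {u : ℝ × ℝ → ℝ} (hu : IsIndirectUtility u)

include hu

lemma integral_le_setIntegral_leftStrip (hc : 0 < c) (h1 : h ≤ 2 / 3) :
    (∫ t in (0 : ℝ)..c * (2 / 3 - h / 3), u (t, 1 - t / c)) - c * (2 / 3 - h / 3) / 6 ≤
      3 * ∫ v in leftStrip c h, u v := by
  have hcont := hu.continuous
  have hstrip := hu.integral_le_setIntegral_regionBetween (a := 0) (b := c * (2 / 3 - h / 3))
    (l := fun t => 2 / 3 - t / c) (g := fun t => 1 - t / c) (by nlinarith) (by fun_prop)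
    (by fun_prop) fun t _ => by linarith
  simp only [sub_sub_sub_cancel_right] at hstrip
  rw [intervalIntegral.integral_sub (Continuous.intervalIntegrable (by fun_prop) _ _)
    intervalIntegrable_const, intervalIntegral.integral_const_mul,
    intervalIntegral.integral_const, smul_eq_mul] at hstrip
  rw [leftStrip]
  linarith

lemma integral_le_setIntegral_middleTriangle (hc : 0 < c) :
    ∫ t in c * (2 / 3 - h / 3)..c * (1 - h / 3),
        (3 * (1 - t / c - h / 3) * u (t, 1 - t / c) - 3 / 2 * (1 - t / c - h / 3) ^ 2) ≤
      3 * ∫ v in middleTriangle c h, u v := by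
  have hstrip := hu.integral_le_setIntegral_regionBetween (a := c * (2 / 3 - h / 3))
    (b := c * (1 - h / 3)) (l := fun _ => h / 3) (g := fun t => 1 - t / c) (by nlinarith)
    (by fun_prop) (by fun_prop) fun t ht => by
      have hle : t / c ≤ 1 - h / 3 := (div_le_iff₀' hc).2 ht.2.le
      linarith
  refine le_trans (le_of_eq ?_) (mul_le_mul_of_nonneg_left hstrip zero_le_three)
  rw [← intervalIntegral.integral_const_mul]
  congr 1 with t
  ring

lemma integral_le_setIntegral_rightStrip (hc : 0 < c) (h0 : 0 < h) :
    (∫ t in c * (1 - h / 3)..c, u (t, 1 - t / c)) - c ^ 2 * h / 18 ≤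
      3 * ∫ v in rightStrip c h, u v := by
  have hcont := hu.continuous
  have hstrip := hu.comp_swap.integral_le_setIntegral_regionBetween (a := 0) (b := h / 3)
    (l := fun t => c * (2 / 3 - t)) (g := fun t => c * (1 - t)) (by positivity) (by fun_prop)
    (by fun_prop) fun t _ => by nlinarith
  have hgap : ∀ t, c * (1 - t) - c * (2 / 3 - t) = c / 3 := fun t => by ring
  simp only [hgap, Function.comp_apply, Prod.swap_prod_mk] at hstrip
  rw [intervalIntegral.integral_sub (Continuous.intervalIntegrable (by fun_prop) _ _)
    intervalIntegrable_const, intervalIntegral.integral_const_mul,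
    intervalIntegral.integral_const, smul_eq_mul] at hstrip
  rw [rightStrip, setIntegral_preimage_swap, integral_hypotenuse_eq_mul_integral u hc.ne']
  linarith

lemma mul_lowerCentroid_le_setIntegral (hc : 1 < c) (h0 : 0 < h) (hh : 9 * (c - 1) * h ^ 2 = c) :
    c / 6 * u (lowerCentroid c h) ≤ 3 * ∫ v in lowerTriangle c h, u v := by
  have hjensen := area_mul_centroid_le_setIntegral (b := bundlePrice c h) (m := -1)
    hu.comp_swap.convexOn (sub_pos.2 hc) h0
  have hcentroid : bundlePrice c h + (-1 + (c - 1)) * h / 3 =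
      2 * c / 3 - (2 * c - 1) * h / 3 := by
    rw [bundlePrice]
    ring
  have harea : (c - 1) * h ^ 2 / 2 = c / 18 := by linarith
  rw [hcentroid, harea] at hjensen
  rw [lowerTriangle, setIntegral_preimage_swap]
  simp only [Function.comp_apply, Prod.swap_prod_mk] at hjensen
  rw [lowerCentroid]
  linarith

lemma integral_middle_le (hc : 1 < c) (h0 : 0 < h) :
    ∫ t in c * (2 / 3 - h / 3)..c * (1 - h / 3),
        ((1 - 3 * (1 - t / c - h / 3)) * u (t, 1 - t / c) + 3 / 2 * (1 - t / c - h / 3) ^ 2) ≤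
      c / 6 * u (lowerCentroid c h) + c / 54 * (2 + 2 * c + 3 * (c - 1) * h) := by
  have hc0 : 0 < c := by linarith
  have hcont := hu.continuous
  rw [← integral_middle_majorant hc0.ne']
  refine intervalIntegral.integral_mono_on (by nlinarith)
    (Continuous.intervalIntegrable (by fun_prop) _ _)
    (Continuous.intervalIntegrable (by fun_prop) _ _) fun t ht => ?_
  have hlower : 2 / 3 - h / 3 ≤ t / c := (le_div_iff₀' hc0).2 ht.1
  have hupper : t / c ≤ 1 - h / 3 := (div_le_iff₀' hc0).2 ht.2
  have hle : lowerCentroid c h ≤ (t, 1 - t / c) := by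
    refine ⟨?_, by simp only [lowerCentroid]; linarith⟩
    simp only [lowerCentroid]
    nlinarith [ht.1]
  gcongr
  · linarith
  · exact hu.le_add hle

lemma hypotenuseIntegral_sub_le (hc : 1 < c) (h0 : 0 < h) (h1 : h ≤ 2 / 3)
    (hh : 9 * (c - 1) * h ^ 2 = c) :
    hypotenuseIntegral c u 1 - 3 * ∫ v in Tri c, u v ≤ c / 27 * (4 + c + 3 * (c - 1) * h) := by
  have hc0 : 0 < c := by linarith
  have hcont := hu.continuous
  have hint : ∀ {φ : ℝ → ℝ} {a b : ℝ}, Continuous φ → IntervalIntegrable φ volume a b :=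
    fun hφ => hφ.intervalIntegrable _ _
  have hregions := sum_setIntegral_le_of_pairwise_disjoint
    (integrableOn_of_continuous_of_isBounded (μ := volume) hcont (isBounded_tri hc0)) hu.nonneg
    (measurableSet_dualRegion c h) (pairwise_disjoint_dualRegion hc0)
    (dualRegion_subset_tri hc h0 h1)
  simp only [Fin.sum_univ_four, dualRegion, Matrix.cons_val] at hregions
  have hsplit : hypotenuseIntegral c u 1 =
      (∫ t in (0 : ℝ)..c * (2 / 3 - h / 3), u (t, 1 - t / c)) +
      (∫ t in c * (2 / 3 - h / 3)..c * (1 - h / 3), u (t, 1 - t / c)) +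
      ∫ t in c * (1 - h / 3)..c, u (t, 1 - t / c) := by
    rw [intervalIntegral.integral_add_adjacent_intervals (hint (by fun_prop))
      (hint (by fun_prop)), intervalIntegral.integral_add_adjacent_intervals
      (hint (by fun_prop)) (hint (by fun_prop)), hypotenuseIntegral, one_mul]
  have hmiddle : (∫ t in c * (2 / 3 - h / 3)..c * (1 - h / 3), u (t, 1 - t / c)) -
      (3 * ∫ v in middleTriangle c h, u v) ≤
      c / 6 * u (lowerCentroid c h) + c / 54 * (2 + 2 * c + 3 * (c - 1) * h) := by
    refine (sub_le_sub_left (hu.integral_le_setIntegral_middleTriangle hc0) _).trans ?_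
    rw [← intervalIntegral.integral_sub (hint (by fun_prop)) (hint (by fun_prop))]
    refine le_trans (le_of_eq ?_) (hu.integral_middle_le hc h0)
    congr 1 with t
    ring
  linarith [hu.integral_le_setIntegral_leftStrip hc0 h1,
    hu.integral_le_setIntegral_rightStrip hc0 h0, hu.mul_lowerCentroid_le_setIntegral hc h0 hh]

end IsIndirectUtility

end DualBound

section Revenue

lemma buyerPrice_eq {M : Finset ((ℝ × ℝ) × ℝ)} {v : ℝ × ℝ} {it : (ℝ × ℝ) × ℝ} (hit : it ∈ M)
    (hmax : ∀ it' ∈ M, util v it' ≤ util v it)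
    (htie : ∀ it' ∈ M, util v it ≤ util v it' → it'.2 ≤ it.2) : buyerPrice M v = it.2 := by
  refine IsGreatest.csSup_eq ⟨⟨it, hit, rfl, hmax⟩, ?_⟩
  rintro _ ⟨it', hit', rfl, hmax'⟩
  exact htie it' hit' (hmax' it hit)

/-- The menu offering nothing for free, the lottery `(1 / c, 1)` at price `2 / 3` and both goods at
price `P`. -/
def triMenu (c P : ℝ) : Finset ((ℝ × ℝ) × ℝ) :=
  {((0, 0), 0), ((1 / c, 1), 2 / 3), ((1, 1), P)}

lemma forall_mem_triMenu {c P : ℝ} {Q : (ℝ × ℝ) × ℝ → Prop} :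
    (∀ it ∈ triMenu c P, Q it) ↔ Q ((0, 0), 0) ∧ Q ((1 / c, 1), 2 / 3) ∧ Q ((1, 1), P) := by
  simp only [triMenu, Finset.forall_mem_insert, Finset.mem_singleton, forall_eq]

lemma buyerPrice_triMenu (c : ℝ) {P : ℝ} (hP : 2 / 3 ≤ P) (v : ℝ × ℝ) :
    buyerPrice (triMenu c P) v =
      if P - 2 / 3 ≤ v.1 - v.1 / c then if P ≤ v.1 + v.2 then P else 0
      else if 2 / 3 ≤ v.1 / c + v.2 then 2 / 3 else 0 := by
  have hmem := (forall_mem_triMenu (c := c) (P := P)).1 fun _ h => h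
  have hdiv : v.1 * (1 / c) = v.1 / c := mul_one_div v.1 c
  split_ifs with hbundle hbuy hbuy
  · refine buyerPrice_eq hmem.2.2 ?_ ?_ <;> simp only [forall_mem_triMenu, util, hdiv]
    · exact ⟨by linarith, by linarith, le_rfl⟩
    · exact ⟨fun _ => by linarith, fun _ => hP, fun _ => le_rfl⟩
  · refine buyerPrice_eq hmem.1 ?_ ?_ <;> simp only [forall_mem_triMenu, util, hdiv]
    · exact ⟨le_rfl, by linarith, by linarith⟩
    · exact ⟨fun _ => le_rfl, fun _ => by linarith, fun _ => by linarith⟩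
  · refine buyerPrice_eq hmem.2.1 ?_ ?_ <;> simp only [forall_mem_triMenu, util, hdiv]
    · exact ⟨by linarith, le_rfl, by linarith⟩
    · exact ⟨fun _ => by linarith, fun _ => le_rfl, fun _ => by linarith⟩
  · refine buyerPrice_eq hmem.1 ?_ ?_ <;> simp only [forall_mem_triMenu, util, hdiv]
    · exact ⟨le_rfl, by linarith, by linarith⟩
    · exact ⟨fun _ => le_rfl, fun _ => by linarith, fun _ => by linarith⟩

lemma integrableOn_buyerPrice_triMenu {c P : ℝ} (hc : 0 < c) (hP : 2 / 3 ≤ P) :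
    IntegrableOn (buyerPrice (triMenu c P)) (Tri c) := by
  have hmeas : Measurable (buyerPrice (triMenu c P)) := by
    simp only [funext (buyerPrice_triMenu c hP)]
    exact Measurable.ite (measurableSet_le (by fun_prop) (by fun_prop))
      (Measurable.ite (measurableSet_le (by fun_prop) (by fun_prop)) (by fun_prop) (by fun_prop))
      (Measurable.ite (measurableSet_le (by fun_prop) (by fun_prop)) (by fun_prop) (by fun_prop))
  refine Measure.integrableOn_of_bounded (M := P) (isBounded_tri hc).measure_lt_top.ne
    hmeas.aestronglyMeasurable (Eventually.of_forall fun v => ?_)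
  rw [buyerPrice_triMenu c hP, Real.norm_eq_abs, abs_le]
  split_ifs <;> constructor <;> linarith

lemma setIntegral_tri {c : ℝ} (hc : 0 < c) {f : ℝ × ℝ → ℝ} (hf : IntegrableOn f (Tri c)) :
    ∫ v in Tri c, f v = ∫ t in (0 : ℝ)..c, ∫ y in (0 : ℝ)..1 - t / c, f (t, y) := by
  have hg : Measurable fun t : ℝ => 1 - t / c := by fun_prop
  have hae := regionBetween_Ioo_ae_eq_Icc (a := 0) (b := c) measurable_const hg (l := fun _ => 0)
  rw [← tri_eq_region hc] at hae
  rw [← setIntegral_congr_set hae]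
  refine setIntegral_regionBetween_Ioo hc.le measurable_const hg (fun t ht => ?_)
    (hf.congr_set_ae hae)
  exact sub_nonneg.2 ((div_le_one hc).2 ht.2.le)

variable {c h : ℝ}

lemma two_thirds_le_bundlePrice (hc : 1 < c) (h1 : h ≤ 2 / 3) : 2 / 3 ≤ bundlePrice c h := by
  rw [bundlePrice]
  nlinarith

lemma mul_le_bundlePrice (h0 : 0 ≤ h) : c * (2 / 3 - h) ≤ bundlePrice c h := by
  rw [bundlePrice]
  linarith

lemma bundlePrice_le (hc : 1 < c) (h0 : 0 ≤ h) : bundlePrice c h ≤ c := by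
  rw [bundlePrice]
  nlinarith

lemma bundlePrice_sub_le_iff (hc : 1 < c) (t : ℝ) :
    bundlePrice c h - 2 / 3 ≤ t - t / c ↔ c * (2 / 3 - h) ≤ t := by
  have hc0 : 0 < c := by linarith
  have hprice : bundlePrice c h - 2 / 3 = (c - 1) * (2 / 3 - h) := by
    rw [bundlePrice]
    ring
  have hgain : t - t / c = (c - 1) * (t / c) := by field_simp
  rw [hprice, hgain, mul_le_mul_iff_of_pos_left (sub_pos.2 hc), le_div_iff₀' hc0]

/-- The revenue of the menu `triMenu c (bundlePrice c h)` from the buyers in `Tri c` with first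
value `t`. -/
def columnRevenue (c h t : ℝ) : ℝ :=
  ∫ y in (0 : ℝ)..1 - t / c, buyerPrice (triMenu c (bundlePrice c h)) (t, y)

lemma columnRevenue_of_lt (hc : 1 < c) (h0 : 0 ≤ h) (h1 : h ≤ 2 / 3) {t : ℝ}
    (ht : t < c * (2 / 3 - h)) : columnRevenue c h t = 2 / 9 := by
  have htc : t / c < 2 / 3 - h := (div_lt_iff₀' (by linarith)).2 ht
  have hstep : ∀ y, (2 / 3 ≤ t / c + y) = (2 / 3 - t / c ≤ y) := fun y =>
    propext sub_le_iff_le_add'.symm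
  simp only [columnRevenue, buyerPrice_triMenu c (two_thirds_le_bundlePrice hc h1),
    bundlePrice_sub_le_iff hc, not_le.2 ht, if_false, hstep]
  rw [integral_ite_le _ (by linarith) (by linarith), max_eq_right (by linarith)]
  ring

lemma columnRevenue_of_le (hc : 1 < c) (h1 : h ≤ 2 / 3) {t : ℝ} (ht : c * (2 / 3 - h) ≤ t)
    (htc : t ≤ c) :
    columnRevenue c h t = bundlePrice c h * (1 - t / c - max 0 (bundlePrice c h - t)) := by
  have hle : t / c ≤ 1 := (div_le_one (by linarith)).2 htc
  have hgain := (bundlePrice_sub_le_iff (h := h) hc t).2 ht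
  have hstep : ∀ y, (bundlePrice c h ≤ t + y) = (bundlePrice c h - t ≤ y) := fun y =>
    propext sub_le_iff_le_add'.symm
  simp only [columnRevenue, buyerPrice_triMenu c (two_thirds_le_bundlePrice hc h1), hgain,
    if_true, hstep]
  exact integral_ite_le _ (by linarith) (by linarith)

lemma setIntegral_buyerPrice_triMenu (hc : 1 < c) (h0 : 0 ≤ h) (h1 : h ≤ 2 / 3)
    (hh : 9 * (c - 1) * h ^ 2 = c) :
    ∫ v in Tri c, buyerPrice (triMenu c (bundlePrice c h)) v =
      c / 27 * (4 + c + 3 * (c - 1) * h) := by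
  have hc0 : 0 < c := by linarith
  have hswitch : 0 ≤ c * (2 / 3 - h) := by nlinarith
  have hswitch_le : c * (2 / 3 - h) ≤ bundlePrice c h := mul_le_bundlePrice h0
  have hle : bundlePrice c h ≤ c := bundlePrice_le hc h0
  obtain ⟨hint₁, hlottery⟩ := intervalIntegral_eq_of_eqOn_Ioo (F := columnRevenue c h) hswitch
    continuous_const fun t ht => columnRevenue_of_lt hc h0 h1 ht.2
  obtain ⟨hint₂, hlow⟩ := intervalIntegral_eq_of_eqOn_Ioo (F := columnRevenue c h) hswitch_le
    (φ := fun t => bundlePrice c h * (1 - bundlePrice c h) + bundlePrice c h * (1 - 1 / c) * t +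
      0 * t ^ 2) (by fun_prop) fun t ht => by
      rw [columnRevenue_of_le hc h1 ht.1.le (ht.2.le.trans hle),
        max_eq_right (sub_nonneg.2 ht.2.le)]
      ring
  obtain ⟨hint₃, hhigh⟩ := intervalIntegral_eq_of_eqOn_Ioo (F := columnRevenue c h) hle
    (φ := fun t => bundlePrice c h + -(bundlePrice c h / c) * t + 0 * t ^ 2) (by fun_prop)
    fun t ht => by
      rw [columnRevenue_of_le hc h1 (hswitch_le.trans ht.1.le) ht.2.le,
        max_eq_left (sub_nonpos.2 ht.1.le)]
      ring
  rw [setIntegral_tri hc0 (integrableOn_buyerPrice_triMenu hc0 (two_thirds_le_bundlePrice hc h1))]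
  change ∫ t in (0 : ℝ)..c, columnRevenue c h t = _
  rw [← intervalIntegral.integral_add_adjacent_intervals (hint₁.trans hint₂) hint₃,
    ← intervalIntegral.integral_add_adjacent_intervals hint₁ hint₂, hlottery, hlow, hhigh,
    intervalIntegral.integral_const, integral_quadratic, integral_quadratic, bundlePrice,
    smul_eq_mul]
  field_simp
  linear_combination (-2187 * c * (c - 1) * h) * hh

lemma exists_sqrt_eq_mul (hc : 4 / 3 ≤ c) :
    ∃ h, √(c * (c - 1)) = 3 * (c - 1) * h ∧ 0 < h ∧ h ≤ 2 / 3 ∧ 9 * (c - 1) * h ^ 2 = c := by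
  have hc1 : 0 < c - 1 := by linarith
  have hprod : 0 < c * (c - 1) := mul_pos (by linarith) hc1
  refine ⟨√(c * (c - 1)) / (3 * (c - 1)), by field_simp,
    div_pos (sqrt_pos.2 hprod) (by positivity), ?_, ?_⟩
  · rw [div_le_iff₀ (by positivity), sqrt_le_left (by positivity)]
    nlinarith
  · rw [div_pow, sq_sqrt hprod.le]
    field_simp
    norm_num

lemma integral_triMeasure (hc : 0 < c) (f : ℝ × ℝ → ℝ) :
    ∫ v, f v ∂triMeasure c = 2 / c * ∫ v in Tri c, f v := by
  rw [triMeasure, integral_smul_measure, ENNReal.toReal_ofReal (by positivity), smul_eq_mul]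

lemma IsMechanism.setIntegral_payment_le {x : ℝ × ℝ → ℝ × ℝ} {p : ℝ × ℝ → ℝ}
    (hm : IsMechanism (Tri c) x p) (hc : 1 < c) (h0 : 0 < h) (h1 : h ≤ 2 / 3)
    (hh : 9 * (c - 1) * h ^ 2 = c) :
    ∫ v in Tri c, p v ≤ c / 27 * (4 + c + 3 * (c - 1) * h) := by
  by_cases hp : IntegrableOn p (Tri c)
  · exact (hm.setIntegral_payment_le_hypotenuseIntegral_sub (by linarith) hp).trans
      (hm.isIndirectUtility.hypotenuseIntegral_sub_le hc h0 h1 hh)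
  · rw [integral_undef hp]
    have : 0 < c - 1 := sub_pos.2 hc
    positivity

end Revenue

/-- for `c > 4/3`, the menu
`{((0,0),0), ((1/c,1),2/3), ((1,1), 2c/3 - √(c(c-1))/3)}` has revenue exactly
`(2/27) * (4 + c + √(c(c-1)))` under the uniform distribution on `Tri c`;
moreover, every IC and IR direct mechanism has revenue at most this value,
so this menu is revenue-optimal. -/
theorem triangle_menu_optimal (c : ℝ) (hc : 4 / 3 < c) :
    revTri c {(((0 : ℝ), (0 : ℝ)), (0 : ℝ)),
              (((1 / c : ℝ), (1 : ℝ)), (2 / 3 : ℝ)),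
              (((1 : ℝ), (1 : ℝ)), 2 * c / 3 - Real.sqrt (c * (c - 1)) / 3)}
        = (2 / 27) * (4 + c + Real.sqrt (c * (c - 1))) ∧
    ∀ (x : ℝ × ℝ → ℝ × ℝ) (p : ℝ × ℝ → ℝ),
      (∀ v ∈ Tri c, (x v).1 ∈ Set.Icc (0 : ℝ) 1 ∧ (x v).2 ∈ Set.Icc (0 : ℝ) 1) →
      (∀ v ∈ Tri c, ∀ v' ∈ Tri c,
        v.1 * (x v').1 + v.2 * (x v').2 - p v' ≤ v.1 * (x v).1 + v.2 * (x v).2 - p v) →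
      (∀ v ∈ Tri c, 0 ≤ v.1 * (x v).1 + v.2 * (x v).2 - p v) →
      ∫ v, p v ∂(triMeasure c) ≤ (2 / 27) * (4 + c + Real.sqrt (c * (c - 1))) := by
  have hc0 : 0 < c := by linarith
  have hc1 : 1 < c := by linarith
  obtain ⟨h, hsqrt, h0, h1, hh⟩ := exists_sqrt_eq_mul hc.le
  have hprice : 2 * c / 3 - 3 * (c - 1) * h / 3 = bundlePrice c h := by
    rw [bundlePrice]
    ring
  have hnormalize : 2 / 27 * (4 + c + 3 * (c - 1) * h) =
      2 / c * (c / 27 * (4 + c + 3 * (c - 1) * h)) := by field_simp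
  rw [hsqrt, hprice, hnormalize]
  refine ⟨?_, fun x p hx hic hir => ?_⟩
  · rw [revTri, integral_triMeasure hc0, ← setIntegral_buyerPrice_triMenu hc1 h0.le h1 hh, triMenu]
  · have hm : IsMechanism (Tri c) x p := ⟨hx, hic, hir⟩
    rw [integral_triMeasure hc0]
    exact mul_le_mul_of_nonneg_left (hm.setIntegral_payment_le hc1 h0 h1 hh)
      (by positivity)
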